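/- Let p_ω = p * γ_ω for a probability density p on ℝ^d. Then for any 0 < ω₀ < ω₁, KL(p_{ω₁} ‖ γ_{ω₁}) ≤ (ω₀/ω₁) · KL(p_{ω₀} ‖ γ_{ω₀}). Consequently, for a Variance Exploding diffusion with marginal variance σ²(T)−σ²(0), KL(p(·,T) ‖ N(0,(σ²(T)−σ²(0))I)) ≤ C / (σ²(T)−σ²(0)) for a constant C independent of T. -/

import Mathlib

/-!
Put `s = 1 / ω`. Up to rescaling, `p_ω` is the law of `s Y + √s Z`, where `Y` has density `p` and
`Z` is standard Gaussian, and `γ_ω` is the law of `√s Z`. The likelihood ratio is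
`lik s z = E[exp (⟪z, Y⟫ - s ‖Y‖² / 2)]`, so the divergence to be bounded is
`ent s = E[lik s B_s * log (lik s B_s)]` for a Brownian motion `B` (`kl_eq_ent`). The claim says
that `ent s / s` is nondecreasing in `s`.

No logarithmic Sobolev inequality and no differentiation in `ω` is needed. The process `lik s B_s`
is a martingale (`lik_step`). Split `B` into independent increments `x`, `α`, `β` of variances
`c`, `a`, `b`. Under the law tilted by the likelihood ratio at time `c + a + b`, compare the joint
law of `(x, α, β)` with the law having the same marginals on `(x, α)` and `(x, β)`, with `α`, `β`
conditionally independent given `x` (`integral_cond_indep`): nonnegativity of this divergence reads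
`ent (c + a) + ent (c + b) ≤ ent (c + a + b) + ent c` (`ent_supermodular`). Since `ent 0 = 0` and
`ent` is nonnegative, `ent` is nondecreasing and is convex along every arithmetic progression
starting at `0`. Hence `ent s ≤ (s / t) * ent t` when `s / t` is rational, and the general case
follows by monotonicity, rounding `s` up to a finer and finer mesh (`ent_le`).

The second moment of `p` gives integrability of all the logarithms involved
(`integrable_lik_log`), through the Cameron–Martin formula (`lintegral_shift_stdG`).
-/

open MeasureTheory Real

/-- Centered Gaussian density on `ℝ^d` with covariance `ω I`. -/
noncomputable def gaussD (d : ℕ) (ω : ℝ) (x : EuclideanSpace ℝ (Fin d)) : ℝ :=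
  (2 * Real.pi * ω) ^ (-(d : ℝ) / 2) * Real.exp (-‖x‖ ^ 2 / (2 * ω))

/-- Gaussian smoothing `p_ω = p * γ_ω`. -/
noncomputable def gaussConv (d : ℕ) (p : EuclideanSpace ℝ (Fin d) → ℝ)
    (ω : ℝ) (x : EuclideanSpace ℝ (Fin d)) : ℝ :=
  ∫ y, p y * gaussD d ω (x - y)

/-! ### Gaussian measures and their translations -/

lemma gaussD_pos (d : ℕ) {ω : ℝ} (hω : 0 < ω) (x : EuclideanSpace ℝ (Fin d)) :
    0 < gaussD d ω x := by
  unfold gaussD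
  positivity

lemma continuous_gaussD (d : ℕ) (ω : ℝ) : Continuous (gaussD d ω) := by
  unfold gaussD
  fun_prop

/-- The standard Gaussian measure on `ℝ^d`, given by its density. -/
noncomputable def stdG (d : ℕ) : Measure (EuclideanSpace ℝ (Fin d)) :=
  volume.withDensity (fun z => ENNReal.ofReal (gaussD d 1 z))

lemma integrable_exp_neg_sq (d : ℕ) {b : ℝ} (hb : 0 < b) :
    Integrable (fun z : EuclideanSpace ℝ (Fin d) => Real.exp (-b * ‖z‖ ^ 2)) := by
  have h := (GaussianFourier.integrable_cexp_neg_mul_sq_norm_add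
    (V := EuclideanSpace ℝ (Fin d)) (b := (b : ℂ)) (by simpa using hb) 0 0).norm
  refine h.congr (.of_forall fun z => ?_)
  simp only [Complex.norm_exp]
  congr 1
  have : (-(b : ℂ) * (‖z‖ : ℂ) ^ 2 + 0 * ((inner ℝ (0 : EuclideanSpace ℝ (Fin d)) z : ℝ) : ℂ))
      = ((-b * ‖z‖ ^ 2 : ℝ) : ℂ) := by push_cast; ring
  rw [this, Complex.ofReal_re]

lemma integral_gaussD_one (d : ℕ) : ∫ z, gaussD d 1 z = 1 := by
  unfold gaussD
  rw [integral_const_mul]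
  have h := GaussianFourier.integral_rexp_neg_mul_sq_norm
    (V := EuclideanSpace ℝ (Fin d)) (b := 1 / 2) (by norm_num)
  have h2 : ∀ z : EuclideanSpace ℝ (Fin d),
      Real.exp (-‖z‖ ^ 2 / (2 * 1)) = Real.exp (-(1 / 2) * ‖z‖ ^ 2) := by
    intro z; congr 1; ring
  simp_rw [h2, h]
  simp only [finrank_euclideanSpace, Fintype.card_fin]
  have h3 : Real.pi / (1 / 2) = 2 * Real.pi * 1 := by ring
  rw [h3, ← Real.rpow_add (by positivity)]
  have : -(d : ℝ) / 2 + d / 2 = 0 := by ring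
  rw [this, Real.rpow_zero]

lemma integrable_gaussD_one (d : ℕ) : Integrable (gaussD d 1) := by
  by_contra h
  have := integral_gaussD_one d
  rw [integral_undef h] at this
  exact zero_ne_one this

instance isProbabilityMeasure_stdG (d : ℕ) : IsProbabilityMeasure (stdG d) := by
  constructor
  rw [stdG, withDensity_apply _ MeasurableSet.univ, Measure.restrict_univ,
    ← ofReal_integral_eq_lintegral_ofReal (integrable_gaussD_one d)
      (.of_forall fun z => (gaussD_pos d one_pos z).le), integral_gaussD_one]
  simp

lemma integral_stdG (d : ℕ) {F : Type*} [NormedAddCommGroup F] [NormedSpace ℝ F]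
    (f : EuclideanSpace ℝ (Fin d) → F) :
    ∫ z, f z ∂(stdG d) = ∫ z, gaussD d 1 z • f z := by
  rw [stdG, integral_withDensity_eq_integral_toReal_smul
    ((continuous_gaussD d 1).measurable.ennreal_ofReal) (by simp)]
  simp_rw [ENNReal.toReal_ofReal (gaussD_pos d one_pos _).le]

lemma integrable_sq_stdG (d : ℕ) : Integrable (fun z => ‖z‖ ^ 2) (stdG d) := by
  rw [stdG, integrable_withDensity_iff_integrable_smul'
    ((continuous_gaussD d 1).measurable.ennreal_ofReal) (by simp)]
  simp_rw [ENNReal.toReal_ofReal (gaussD_pos d one_pos _).le, smul_eq_mul]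
  refine ((integrable_exp_neg_sq d (b := 1 / 4) (by norm_num)).const_mul
    (4 * (2 * Real.pi * 1) ^ (-(d : ℝ) / 2))).mono'
    ((continuous_gaussD d 1).mul (by fun_prop)).aestronglyMeasurable (.of_forall fun z => ?_)
  have hp : 0 < (2 * Real.pi * 1) ^ (-(d : ℝ) / 2) := by positivity
  rw [Real.norm_of_nonneg (mul_nonneg (gaussD_pos d one_pos _).le (by positivity)), gaussD]
  have h1 : ‖z‖ ^ 2 ≤ 4 * Real.exp (1 / 4 * ‖z‖ ^ 2) := by
    have := Real.add_one_le_exp (1 / 4 * ‖z‖ ^ 2)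
    linarith
  have h2 : Real.exp (-‖z‖ ^ 2 / (2 * 1)) * Real.exp (1 / 4 * ‖z‖ ^ 2)
      = Real.exp (-(1 / 4) * ‖z‖ ^ 2) := by
    rw [← Real.exp_add]; congr 1; ring
  calc (2 * Real.pi * 1) ^ (-(d : ℝ) / 2) * Real.exp (-‖z‖ ^ 2 / (2 * 1)) * ‖z‖ ^ 2
      ≤ (2 * Real.pi * 1) ^ (-(d : ℝ) / 2) * Real.exp (-‖z‖ ^ 2 / (2 * 1))
        * (4 * Real.exp (1 / 4 * ‖z‖ ^ 2)) := by gcongr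
    _ = _ := by rw [← h2]; ring

/-- Cameron–Martin formula: tilting by `exp(⟪z,u⟫ - ‖u‖²/2)` translates the Gaussian by `u`. -/
lemma lintegral_shift_stdG (d : ℕ) (u : EuclideanSpace ℝ (Fin d))
    {f : EuclideanSpace ℝ (Fin d) → ENNReal} (hf : Measurable f) :
    ∫⁻ z, f z * ENNReal.ofReal (Real.exp (inner ℝ z u - ‖u‖ ^ 2 / 2)) ∂(stdG d)
      = ∫⁻ z, f (z + u) ∂(stdG d) := by
  have hg : Measurable fun z => ENNReal.ofReal (gaussD d 1 z) :=
    (continuous_gaussD d 1).measurable.ennreal_ofReal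
  rw [stdG, lintegral_withDensity_eq_lintegral_mul _ hg (by fun_prop),
    lintegral_withDensity_eq_lintegral_mul _ hg (by fun_prop),
    ← lintegral_add_right_eq_self _ u]
  refine lintegral_congr fun z => ?_
  simp only [Pi.mul_apply]
  rw [mul_left_comm, mul_comm (ENNReal.ofReal (gaussD d 1 z)),
    ← ENNReal.ofReal_mul (gaussD_pos d one_pos _).le]
  congr 2
  rw [gaussD, gaussD, mul_assoc, ← Real.exp_add]
  congr 2
  rw [norm_add_sq_real, inner_add_left, real_inner_self_eq_norm_sq]
  ring

lemma charFun_stdG (d : ℕ) (t : EuclideanSpace ℝ (Fin d)) :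
    charFun (stdG d) t = Complex.exp (-(‖t‖ : ℂ) ^ 2 / 2) := by
  rw [charFun_apply, integral_stdG]
  have h := GaussianFourier.integral_cexp_neg_mul_sq_norm_add
    (V := EuclideanSpace ℝ (Fin d)) (b := 1 / 2) (by norm_num) Complex.I t
  have h0 := GaussianFourier.integral_cexp_neg_mul_sq_norm
    (V := EuclideanSpace ℝ (Fin d)) (b := 1 / 2) (by norm_num)
  rw [← h0] at h
  have key : ∀ z : EuclideanSpace ℝ (Fin d),
      gaussD d 1 z • Complex.exp ((inner ℝ z t : ℝ) * Complex.I)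
      = (((2 * Real.pi * 1) ^ (-(d : ℝ) / 2) : ℝ) : ℂ) *
        Complex.exp (-(1 / 2) * (‖z‖ : ℂ) ^ 2 + Complex.I * (inner ℝ t z : ℝ)) := by
    intro z
    rw [gaussD, Complex.real_smul, Complex.ofReal_mul, Complex.ofReal_exp, mul_assoc,
      ← Complex.exp_add, real_inner_comm]
    congr 2
    push_cast
    ring
  have key0 : ∀ z : EuclideanSpace ℝ (Fin d),
      ((gaussD d 1 z : ℝ) : ℂ) = (((2 * Real.pi * 1) ^ (-(d : ℝ) / 2) : ℝ) : ℂ) *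
        Complex.exp (-(1 / 2) * (‖z‖ : ℂ) ^ 2) := by
    intro z
    rw [gaussD, Complex.ofReal_mul, Complex.ofReal_exp]
    congr 2
    push_cast
    ring
  have h1 : ∫ z, ((gaussD d 1 z : ℝ) : ℂ) = 1 := by
    rw [integral_complex_ofReal, integral_gaussD_one]; simp
  simp_rw [key0] at h1
  rw [integral_const_mul] at h1
  simp_rw [key]
  rw [integral_const_mul, h, ← mul_assoc, h1, one_mul, Complex.I_sq]
  congr 1
  ring

/-- The centred Gaussian measure on `ℝ^d` with covariance `s I`, as the image of the standard one
under `z ↦ √s z`; for `s = 0` this is the Dirac mass at the origin. -/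
noncomputable def gaussM (d : ℕ) (s : ℝ) : Measure (EuclideanSpace ℝ (Fin d)) :=
  (stdG d).map (fun z => √s • z)

instance isProbabilityMeasure_gaussM (d : ℕ) (s : ℝ) : IsProbabilityMeasure (gaussM d s) :=
  Measure.isProbabilityMeasure_map (by fun_prop)

lemma gaussM_conv (d : ℕ) {a b : ℝ} (ha : 0 ≤ a) (hb : 0 ≤ b) :
    ((gaussM d a).prod (gaussM d b)).map (fun z => z.1 + z.2) = gaussM d (a + b) := by
  change Measure.conv (gaussM d a) (gaussM d b) = _
  refine Measure.ext_of_charFun (funext fun t => ?_)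
  have hs : ∀ s : ℝ, 0 ≤ s → charFun (gaussM d s) t = Complex.exp (-(s * (‖t‖ : ℂ) ^ 2) / 2) := by
    intro s h
    rw [gaussM, charFun_map_smul, charFun_stdG, norm_smul, Real.norm_of_nonneg (Real.sqrt_nonneg s)]
    congr 2
    rw [← Complex.ofReal_pow, mul_pow, Real.sq_sqrt h]
    push_cast
    rfl
  rw [charFun_conv, hs a ha, hs b hb, hs (a + b) (add_nonneg ha hb), ← Complex.exp_add]
  congr 1
  push_cast
  ring

lemma gaussM_zero (d : ℕ) : gaussM d 0 = Measure.dirac 0 := by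
  simp [gaussM]

lemma integrable_sq_gaussM (d : ℕ) (s : ℝ) : Integrable (fun z => ‖z‖ ^ 2) (gaussM d s) := by
  rw [gaussM, integrable_map_measure (by fun_prop) (by fun_prop)]
  simp only [Function.comp_def, norm_smul, mul_pow]
  exact (integrable_sq_stdG d).const_mul _

/-- The density at `z` of the law of `s y + √s Z` with respect to the law of `√s Z`,
where `Z` is standard Gaussian. -/
noncomputable def tilt {d : ℕ} (s : ℝ) (z y : EuclideanSpace ℝ (Fin d)) : ℝ :=
  Real.exp (inner ℝ z y - s * ‖y‖ ^ 2 / 2)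

lemma tilt_pos {d : ℕ} (s : ℝ) (z y : EuclideanSpace ℝ (Fin d)) : 0 < tilt s z y :=
  Real.exp_pos _

lemma tilt_add {d : ℕ} (s t : ℝ) (z w y : EuclideanSpace ℝ (Fin d)) :
    tilt (s + t) (z + w) y = tilt s z y * tilt t w y := by
  rw [tilt, tilt, tilt, ← Real.exp_add, inner_add_left]
  congr 1
  ring

lemma continuous_tilt {d : ℕ} (s : ℝ) :
    Continuous (fun q : EuclideanSpace ℝ (Fin d) × EuclideanSpace ℝ (Fin d) => tilt s q.1 q.2) := by
  unfold tilt
  fun_prop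

lemma lintegral_tilt_gaussM {d : ℕ} {s : ℝ} (hs : 0 ≤ s) (y : EuclideanSpace ℝ (Fin d))
    {f : EuclideanSpace ℝ (Fin d) → ENNReal} (hf : Measurable f) :
    ∫⁻ z, f z * ENNReal.ofReal (tilt s z y) ∂(gaussM d s) = ∫⁻ z, f (z + s • y) ∂(gaussM d s) := by
  have hk : Measurable fun z => ENNReal.ofReal (tilt s z y) :=
    ((continuous_tilt s).comp (by fun_prop : Continuous fun z => (z, y))).measurable.ennreal_ofReal
  have h := lintegral_shift_stdG d (√s • y) (f := fun z => f (√s • z)) (by fun_prop)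
  rw [gaussM, lintegral_map (by fun_prop) (by fun_prop), lintegral_map (by fun_prop) (by fun_prop)]
  have hss : √s • √s • y = s • y := by rw [smul_smul, Real.mul_self_sqrt hs]
  simp only [smul_add, hss] at h
  rw [← h]
  refine lintegral_congr fun z => ?_
  rw [tilt, norm_smul, mul_pow, Real.norm_of_nonneg (Real.sqrt_nonneg s), Real.sq_sqrt hs,
    inner_smul_left, inner_smul_right]
  simp

lemma integrable_tilt_gaussM {d : ℕ} {s : ℝ} (hs : 0 ≤ s) (y : EuclideanSpace ℝ (Fin d)) :
    Integrable (fun z => tilt s z y) (gaussM d s) ∧ ∫ z, tilt s z y ∂(gaussM d s) = 1 := by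
  have h := lintegral_tilt_gaussM hs y (f := fun _ => 1) measurable_const
  simp only [one_mul, lintegral_const, measure_univ] at h
  have hm : AEStronglyMeasurable (fun z => tilt s z y) (gaussM d s) :=
    ((continuous_tilt s).comp (by fun_prop : Continuous fun z => (z, y))).aestronglyMeasurable
  refine ⟨⟨hm, ?_⟩, ?_⟩
  · rw [hasFiniteIntegral_iff_ofReal (.of_forall fun z => (tilt_pos _ _ _).le), h]
    simp
  · rw [integral_eq_lintegral_of_nonneg_ae (.of_forall fun z => (tilt_pos _ _ _).le) hm, h]
    simp

/-! ### The likelihood ratio -/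

lemma tilt_le {d : ℕ} {s : ℝ} (hs : 0 < s) (z y : EuclideanSpace ℝ (Fin d)) :
    tilt s z y ≤ Real.exp (‖z‖ ^ 2 / (2 * s)) := by
  refine Real.exp_le_exp.2 ?_
  have h := sq_nonneg ‖z - s • y‖
  rw [norm_sub_sq_real, inner_smul_right, norm_smul, mul_pow, Real.norm_of_nonneg hs.le] at h
  rw [le_div_iff₀ (by positivity)]
  nlinarith

/-- The likelihood ratio at `z` between the law of `s Y + √s Z`, with `Y` of law `ν`, and the law
of `√s Z`. -/
noncomputable def lik {d : ℕ} (ν : Measure (EuclideanSpace ℝ (Fin d))) (s : ℝ)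
    (z : EuclideanSpace ℝ (Fin d)) : ℝ :=
  ∫ y, tilt s z y ∂ν

lemma lik_nonneg {d : ℕ} (ν : Measure (EuclideanSpace ℝ (Fin d))) (s : ℝ) (z : EuclideanSpace ℝ (Fin d)) : 0 ≤ lik ν s z :=
  integral_nonneg fun y => (tilt_pos s z y).le

section

variable {d : ℕ} (ν : Measure (EuclideanSpace ℝ (Fin d))) [IsProbabilityMeasure ν]

/-- The hypothesis on `(s, z)` is satisfied for `gaussM d s`-almost every `z`, including when
`s = 0`. -/
lemma integrable_tilt {s : ℝ} {z : EuclideanSpace ℝ (Fin d)} (h : 0 < s ∨ (s = 0 ∧ z = 0)) :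
    Integrable (fun y => tilt s z y) ν := by
  rcases h with hs | ⟨rfl, rfl⟩
  · refine (integrable_const (Real.exp (‖z‖ ^ 2 / (2 * s)))).mono'
      ((continuous_tilt s).comp (by fun_prop : Continuous fun y => (z, y))).aestronglyMeasurable
      (.of_forall fun y => ?_)
    rw [Real.norm_of_nonneg (tilt_pos _ _ _).le]
    exact tilt_le hs z y
  · simp [tilt]

lemma lik_pos {s : ℝ} {z : EuclideanSpace ℝ (Fin d)} (h : 0 < s ∨ (s = 0 ∧ z = 0)) :
    0 < lik ν s z :=
  integral_exp_pos (integrable_tilt ν h)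

lemma lik_zero : lik ν 0 0 = 1 := by
  simp [lik, tilt]

@[fun_prop]
lemma measurable_lik (s : ℝ) : Measurable (lik ν s) :=
  ((continuous_tilt s).stronglyMeasurable.integral_prod_right').measurable

lemma ae_good {s : ℝ} (hs : 0 ≤ s) :
    ∀ᵐ z ∂(gaussM d s), 0 < s ∨ (s = 0 ∧ z = 0) := by
  rcases hs.eq_or_lt with rfl | h
  · rw [gaussM_zero, ae_dirac_eq]
    simp
  · exact .of_forall fun _ => .inl h

/-- The martingale property of the likelihood ratio along Brownian motion. -/
lemma lik_step {c a : ℝ} (ha : 0 ≤ a) {x : EuclideanSpace ℝ (Fin d)}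
    (h : 0 < c ∨ (c = 0 ∧ x = 0)) :
    Integrable (fun z => lik ν (c + a) (x + z)) (gaussM d a) ∧
      ∫ z, lik ν (c + a) (x + z) ∂(gaussM d a) = lik ν c x := by
  have hint : Integrable (fun q : EuclideanSpace ℝ (Fin d) × EuclideanSpace ℝ (Fin d) =>
      tilt c x q.2 * tilt a q.1 q.2) ((gaussM d a).prod ν) := by
    have hc : Continuous (fun q : EuclideanSpace ℝ (Fin d) × EuclideanSpace ℝ (Fin d) =>
        tilt c x q.2 * tilt a q.1 q.2) :=
      ((continuous_tilt c).comp (by fun_prop :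
        Continuous fun q : EuclideanSpace ℝ (Fin d) × EuclideanSpace ℝ (Fin d) =>
          (x, q.2))).mul (continuous_tilt a)
    rw [integrable_prod_iff' hc.aestronglyMeasurable]
    refine ⟨.of_forall fun y => (integrable_tilt_gaussM ha y).1.const_mul (tilt c x y), ?_⟩
    refine (integrable_tilt ν h).congr (.of_forall fun y => ?_)
    simp only [norm_mul, Real.norm_of_nonneg (tilt_pos _ _ _).le]
    rw [integral_const_mul, (integrable_tilt_gaussM ha y).2, mul_one]
  simp only [lik, tilt_add]
  refine ⟨hint.integral_prod_left, ?_⟩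
  rw [integral_integral_swap hint]
  refine integral_congr_ae (.of_forall fun y => ?_)
  simp only
  rw [integral_const_mul, (integrable_tilt_gaussM ha y).2, mul_one]

lemma lik_integral {s : ℝ} (hs : 0 ≤ s) :
    Integrable (lik ν s) (gaussM d s) ∧ ∫ z, lik ν s z ∂(gaussM d s) = 1 := by
  have h := lik_step ν (c := 0) hs (x := 0) (.inr ⟨rfl, rfl⟩)
  simpa [lik_zero] using h

lemma integrable_lik_mul_sq (hν : Integrable (fun y => ‖y‖ ^ 2) ν) {s : ℝ} (hs : 0 < s) :
    Integrable (fun z => lik ν s z * ‖z‖ ^ 2) (gaussM d s) := by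
  refine ⟨by fun_prop, ?_⟩
  rw [hasFiniteIntegral_iff_ofReal
    (.of_forall fun z => mul_nonneg (lik_nonneg ν s z) (sq_nonneg _))]
  have hm : Measurable fun q : EuclideanSpace ℝ (Fin d) × EuclideanSpace ℝ (Fin d) =>
      ENNReal.ofReal (‖q.1‖ ^ 2) * ENNReal.ofReal (tilt s q.1 q.2) :=
    (by fun_prop : Measurable fun q : EuclideanSpace ℝ (Fin d) × EuclideanSpace ℝ (Fin d) =>
      ENNReal.ofReal (‖q.1‖ ^ 2)).mul (continuous_tilt s).measurable.ennreal_ofReal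
  have h1 : ∀ z, ENNReal.ofReal (lik ν s z * ‖z‖ ^ 2)
      = ∫⁻ y, ENNReal.ofReal (‖z‖ ^ 2) * ENNReal.ofReal (tilt s z y) ∂ν := by
    intro z
    rw [lintegral_const_mul' _ _ ENNReal.ofReal_ne_top,
      ← ofReal_integral_eq_lintegral_ofReal (integrable_tilt ν (.inl hs))
        (.of_forall fun y => (tilt_pos s z y).le), mul_comm, ENNReal.ofReal_mul (sq_nonneg _)]
    rfl
  simp_rw [h1]
  rw [lintegral_lintegral_swap hm.aemeasurable]
  have h2 : ∀ y : EuclideanSpace ℝ (Fin d),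
      ∫⁻ z, ENNReal.ofReal (‖z‖ ^ 2) * ENNReal.ofReal (tilt s z y) ∂(gaussM d s)
        ≤ ENNReal.ofReal (2 * (∫ z, ‖z‖ ^ 2 ∂(gaussM d s)) + 2 * s ^ 2 * ‖y‖ ^ 2) := by
    intro y
    have hi : Integrable (fun z => 2 * ‖z‖ ^ 2 + 2 * s ^ 2 * ‖y‖ ^ 2) (gaussM d s) :=
      ((integrable_sq_gaussM d s).const_mul 2).add (integrable_const _)
    rw [lintegral_tilt_gaussM hs.le y (f := fun z => ENNReal.ofReal (‖z‖ ^ 2)) (by fun_prop)]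
    calc ∫⁻ z, ENNReal.ofReal (‖z + s • y‖ ^ 2) ∂(gaussM d s)
        ≤ ∫⁻ z, ENNReal.ofReal (2 * ‖z‖ ^ 2 + 2 * s ^ 2 * ‖y‖ ^ 2) ∂(gaussM d s) := by
          refine lintegral_mono fun z => ENNReal.ofReal_le_ofReal ?_
          have := norm_add_le z (s • y)
          rw [norm_smul, Real.norm_of_nonneg hs.le] at this
          have h3 : ‖z + s • y‖ ^ 2 ≤ (‖z‖ + s * ‖y‖) ^ 2 :=
            pow_le_pow_left₀ (norm_nonneg _) this 2
          nlinarith [sq_nonneg (‖z‖ - s * ‖y‖)]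
      _ = _ := by
          rw [← ofReal_integral_eq_lintegral_ofReal hi (.of_forall fun z => by positivity),
            integral_add ((integrable_sq_gaussM d s).const_mul 2) (integrable_const _),
            integral_const_mul]
          simp
  have hi : Integrable (fun y => 2 * (∫ z, ‖z‖ ^ 2 ∂(gaussM d s)) + 2 * s ^ 2 * ‖y‖ ^ 2) ν :=
    (integrable_const _).add (hν.const_mul _)
  have h0 : 0 ≤ ∫ z, ‖z‖ ^ 2 ∂(gaussM d s) := integral_nonneg fun z => sq_nonneg _
  refine (lintegral_mono h2).trans_lt ?_
  rw [← ofReal_integral_eq_lintegral_ofReal hi (.of_forall fun z => by positivity)]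
  exact ENNReal.ofReal_lt_top

/-- The divergence of the law of `s Y + √s Z` from that of `√s Z` is finite. -/
lemma integrable_lik_log (hν : Integrable (fun y => ‖y‖ ^ 2) ν) {s : ℝ} (hs : 0 ≤ s) :
    Integrable (fun z => lik ν s z * Real.log (lik ν s z)) (gaussM d s) := by
  rcases hs.eq_or_lt with rfl | hs
  · rw [gaussM_zero]
    exact integrable_dirac (by simp [lik_zero])
  refine (((lik_integral ν hs.le).1.add (integrable_const 1)).add
    ((integrable_lik_mul_sq ν hν hs).const_mul (1 / (2 * s)))).mono'
    (by fun_prop) (.of_forall fun z => ?_)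
  have hp : 0 < lik ν s z := lik_pos ν (.inl hs)
  have hup : Real.log (lik ν s z) ≤ ‖z‖ ^ 2 / (2 * s) := by
    rw [Real.log_le_iff_le_exp hp]
    calc lik ν s z ≤ ∫ y, Real.exp (‖z‖ ^ 2 / (2 * s)) ∂ν :=
          integral_mono (integrable_tilt ν (.inl hs)) (integrable_const _) fun y => tilt_le hs z y
      _ = _ := by simp
  have hlow := Real.one_sub_inv_le_log_of_pos hp
  have h1 := mul_le_mul_of_nonneg_left hup hp.le
  have h2 := mul_le_mul_of_nonneg_left hlow hp.le
  rw [mul_sub, mul_inv_cancel₀ hp.ne', mul_one] at h2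
  have h3 : 0 ≤ lik ν s z * (‖z‖ ^ 2 / (2 * s)) := by positivity
  have h4 : 1 / (2 * s) * (lik ν s z * ‖z‖ ^ 2) = lik ν s z * (‖z‖ ^ 2 / (2 * s)) := by ring
  simp only [Pi.add_apply]
  rw [h4, Real.norm_eq_abs, abs_le]
  constructor <;> linarith

end

/-! ### Supermodularity of the divergence -/

/-- The divergence of the law of `s Y + √s Z` from that of `√s Z`, with `Y` of law `ν` and `Z`
standard Gaussian, as a function of the signal-to-noise ratio `s`. -/
noncomputable def ent {d : ℕ} (ν : Measure (EuclideanSpace ℝ (Fin d))) (s : ℝ) : ℝ :=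
  ∫ z, lik ν s z * Real.log (lik ν s z) ∂(gaussM d s)

/-- If `L1` is the conditional expectation of `L` given the first coordinate, then
`E[L g] = E[L1 g]` for every `g` depending on the first coordinate only. -/
lemma tower {X Y : Type*} [MeasurableSpace X] [MeasurableSpace Y] {μ : Measure X} {η : Measure Y}
    [IsProbabilityMeasure μ] [IsProbabilityMeasure η] {L : X × Y → ℝ} (hLm : Measurable L)
    (hL0 : ∀ q, 0 ≤ L q) {L1 : X → ℝ}
    (h : ∀ᵐ x ∂μ, Integrable (fun y => L (x, y)) η ∧ ∫ y, L (x, y) ∂η = L1 x)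
    {g : X → ℝ} (hg : Measurable g) (hi : Integrable (fun x => L1 x * g x) μ) :
    Integrable (fun q : X × Y => L q * g q.1) (μ.prod η) ∧
      ∫ q, L q * g q.1 ∂(μ.prod η) = ∫ x, L1 x * g x ∂μ := by
  have hint : Integrable (fun q : X × Y => L q * g q.1) (μ.prod η) := by
    rw [integrable_prod_iff (by fun_prop)]
    refine ⟨h.mono fun x hx => hx.1.mul_const (g x), hi.norm.congr (h.mono fun x hx => ?_)⟩
    have h0 : 0 ≤ L1 x := hx.2 ▸ integral_nonneg fun y => hL0 _
    simp only [norm_mul, Real.norm_of_nonneg (hL0 _)]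
    rw [integral_mul_const, hx.2, Real.norm_of_nonneg h0]
  refine ⟨hint, ?_⟩
  rw [integral_prod _ hint]
  refine integral_congr_ae (h.mono fun x hx => ?_)
  simp only
  rw [integral_mul_const, hx.2]

lemma integral_preserving {X Y : Type*} [MeasurableSpace X] [MeasurableSpace Y] {μ : Measure X}
    {η : Measure Y} {T : X → Y} (hT : MeasurePreserving T μ η) {f : Y → ℝ} (hf : Integrable f η) :
    Integrable (fun x => f (T x)) μ ∧ ∫ x, f (T x) ∂μ = ∫ y, f y ∂η := by
  refine ⟨hT.integrable_comp_of_integrable hf, ?_⟩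
  rw [← hT.map_eq, integral_map hT.measurable.aemeasurable]
  rw [hT.map_eq]
  exact hf.aestronglyMeasurable

lemma preserving_add (d : ℕ) {a b : ℝ} (ha : 0 ≤ a) (hb : 0 ≤ b) :
    MeasurePreserving
      (fun q : EuclideanSpace ℝ (Fin d) × EuclideanSpace ℝ (Fin d) => q.1 + q.2)
      ((gaussM d a).prod (gaussM d b)) (gaussM d (a + b)) :=
  ⟨by fun_prop, gaussM_conv d ha hb⟩

lemma preserving_add_add (d : ℕ) {c a b : ℝ} (hc : 0 ≤ c) (ha : 0 ≤ a) (hb : 0 ≤ b) :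
    MeasurePreserving
      (fun q : (EuclideanSpace ℝ (Fin d) × EuclideanSpace ℝ (Fin d)) × EuclideanSpace ℝ (Fin d) =>
        q.1.1 + q.1.2 + q.2)
      (((gaussM d c).prod (gaussM d a)).prod (gaussM d b)) (gaussM d (c + a + b)) :=
  (preserving_add d (add_nonneg hc ha) hb).comp
    ((preserving_add d hc ha).prod (MeasurePreserving.id (gaussM d b)))

lemma preserving_swap {X Y Z : Type*} [MeasurableSpace X] [MeasurableSpace Y] [MeasurableSpace Z]
    (μ : Measure X) (η : Measure Y) (θ : Measure Z) [IsProbabilityMeasure μ]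
    [IsProbabilityMeasure η] [IsProbabilityMeasure θ] :
    MeasurePreserving (fun q : (X × Y) × Z => ((q.1.1, q.2), q.1.2))
      ((μ.prod η).prod θ) ((μ.prod θ).prod η) :=
  ((measurePreserving_prodAssoc μ θ η).symm _).comp
    (((MeasurePreserving.id μ).prod Measure.measurePreserving_swap).comp
      (measurePreserving_prodAssoc μ η θ))

section

variable {d : ℕ} (ν : Measure (EuclideanSpace ℝ (Fin d))) [IsProbabilityMeasure ν]

lemma ent_zero : ent ν 0 = 0 := by
  simp [ent, gaussM_zero, lik_zero]

lemma ent_nonneg (hν : Integrable (fun y => ‖y‖ ^ 2) ν) {s : ℝ} (hs : 0 ≤ s) : 0 ≤ ent ν s := by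
  have h := lik_integral ν hs
  have h1 : ∫ z, (lik ν s z - 1) ∂(gaussM d s) = 0 := by
    rw [integral_sub h.1 (integrable_const 1), h.2]
    simp
  rw [← h1]
  refine integral_mono_ae (h.1.sub (integrable_const 1)) (integrable_lik_log ν hν hs)
    ((ae_good (d := d) hs).mono fun z hz => ?_)
  have hp := lik_pos ν hz
  have h2 := mul_le_mul_of_nonneg_left (Real.one_sub_inv_le_log_of_pos hp) hp.le
  rwa [mul_sub, mul_inv_cancel₀ hp.ne', mul_one] at h2

/-- In terms of independent increments `x`, `α`, `β` of variances `c`, `a`, `b`, the logarithm of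
the likelihood ratio at time `c + a`, averaged under the law tilted by the ratio at time
`c + a + b`, gives the divergence at `c + a`. -/
lemma tower_mid (hν : Integrable (fun y => ‖y‖ ^ 2) ν) {c a b : ℝ} (hc : 0 ≤ c) (ha : 0 < a)
    (hb : 0 < b) :
    Integrable (fun q : (EuclideanSpace ℝ (Fin d) × EuclideanSpace ℝ (Fin d)) ×
        EuclideanSpace ℝ (Fin d) =>
        lik ν (c + a + b) (q.1.1 + q.1.2 + q.2) * Real.log (lik ν (c + a) (q.1.1 + q.1.2)))
      (((gaussM d c).prod (gaussM d a)).prod (gaussM d b)) ∧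
    ∫ q, lik ν (c + a + b) (q.1.1 + q.1.2 + q.2) * Real.log (lik ν (c + a) (q.1.1 + q.1.2))
      ∂(((gaussM d c).prod (gaussM d a)).prod (gaussM d b)) = ent ν (c + a) := by
  have hs : ∀ q : EuclideanSpace ℝ (Fin d) × EuclideanSpace ℝ (Fin d),
      Integrable (fun y => lik ν (c + a + b) (q.1 + q.2 + y)) (gaussM d b) ∧
        ∫ y, lik ν (c + a + b) (q.1 + q.2 + y) ∂(gaussM d b) = lik ν (c + a) (q.1 + q.2) :=
    fun q => lik_step ν hb.le (.inl (add_pos_of_nonneg_of_pos hc ha))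
  have h1 := integral_preserving (preserving_add d hc ha.le)
    (integrable_lik_log ν hν (add_nonneg hc ha.le))
  have h2 := tower (μ := (gaussM d c).prod (gaussM d a)) (η := gaussM d b)
    (L := fun q => lik ν (c + a + b) (q.1.1 + q.1.2 + q.2))
    (L1 := fun q => lik ν (c + a) (q.1 + q.2))
    (g := fun q => Real.log (lik ν (c + a) (q.1 + q.2)))
    (by fun_prop) (fun q => lik_nonneg ν _ _)
    (.of_forall hs) (by fun_prop) h1.1
  exact ⟨h2.1, h2.2.trans h1.2⟩

lemma tower_base (hν : Integrable (fun y => ‖y‖ ^ 2) ν) {c a b : ℝ} (hc : 0 ≤ c) (ha : 0 < a)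
    (hb : 0 < b) :
    Integrable (fun q : (EuclideanSpace ℝ (Fin d) × EuclideanSpace ℝ (Fin d)) ×
        EuclideanSpace ℝ (Fin d) =>
        lik ν (c + a + b) (q.1.1 + q.1.2 + q.2) * Real.log (lik ν c q.1.1))
      (((gaussM d c).prod (gaussM d a)).prod (gaussM d b)) ∧
    ∫ q, lik ν (c + a + b) (q.1.1 + q.1.2 + q.2) * Real.log (lik ν c q.1.1)
      ∂(((gaussM d c).prod (gaussM d a)).prod (gaussM d b)) = ent ν c := by
  have hs : ∀ q : EuclideanSpace ℝ (Fin d) × EuclideanSpace ℝ (Fin d),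
      Integrable (fun y => lik ν (c + a + b) (q.1 + q.2 + y)) (gaussM d b) ∧
        ∫ y, lik ν (c + a + b) (q.1 + q.2 + y) ∂(gaussM d b) = lik ν (c + a) (q.1 + q.2) :=
    fun q => lik_step ν hb.le (.inl (add_pos_of_nonneg_of_pos hc ha))
  have h1 := tower (μ := gaussM d c) (η := gaussM d a)
    (L := fun q => lik ν (c + a) (q.1 + q.2)) (L1 := fun x => lik ν c x)
    (g := fun x => Real.log (lik ν c x))
    (by fun_prop) (fun q => lik_nonneg ν _ _)
    ((ae_good hc).mono fun x hx => lik_step ν ha.le hx) (by fun_prop)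
    (integrable_lik_log ν hν hc)
  have h2 := tower (μ := (gaussM d c).prod (gaussM d a)) (η := gaussM d b)
    (L := fun q => lik ν (c + a + b) (q.1.1 + q.1.2 + q.2))
    (L1 := fun q => lik ν (c + a) (q.1 + q.2))
    (g := fun q => Real.log (lik ν c q.1))
    (by fun_prop) (fun q => lik_nonneg ν _ _)
    (.of_forall hs) (by fun_prop) h1.1
  exact ⟨h2.1, h2.2.trans h1.2⟩

/-- The density under which `α` and `β` are conditionally independent given `x`, with the same
marginals on `(x, α)` and `(x, β)` as the likelihood ratio, has total mass one. -/
lemma integral_cond_indep {c a b : ℝ} (hc : 0 ≤ c) (ha : 0 < a) (hb : 0 < b) :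
    Integrable (fun q : (EuclideanSpace ℝ (Fin d) × EuclideanSpace ℝ (Fin d)) ×
        EuclideanSpace ℝ (Fin d) =>
        lik ν (c + b) (q.1.1 + q.2) * (lik ν (c + a) (q.1.1 + q.1.2) / lik ν c q.1.1))
      (((gaussM d c).prod (gaussM d a)).prod (gaussM d b)) ∧
    ∫ q, lik ν (c + b) (q.1.1 + q.2) * (lik ν (c + a) (q.1.1 + q.1.2) / lik ν c q.1.1)
      ∂(((gaussM d c).prod (gaussM d a)).prod (gaussM d b)) = 1 := by
  have hgood : ∀ᵐ q ∂((gaussM d c).prod (gaussM d a)), 0 < c ∨ (c = 0 ∧ q.1 = 0) :=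
    Measure.quasiMeasurePreserving_fst.ae (ae_good hc)
  have h1 := integral_preserving (preserving_add d hc ha.le)
    (lik_integral ν (add_nonneg hc ha.le)).1
  have hae : (fun q : EuclideanSpace ℝ (Fin d) × EuclideanSpace ℝ (Fin d) =>
      lik ν (c + a) (q.1 + q.2)) =ᵐ[(gaussM d c).prod (gaussM d a)]
      fun q => lik ν c q.1 * (lik ν (c + a) (q.1 + q.2) / lik ν c q.1) := by
    refine hgood.mono fun q hq => ?_
    have := (lik_pos ν hq).ne'
    field_simp
  have hs : ∀ᵐ q ∂((gaussM d c).prod (gaussM d a)),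
      Integrable (fun y => lik ν (c + b) (q.1 + y)) (gaussM d b) ∧
        ∫ y, lik ν (c + b) (q.1 + y) ∂(gaussM d b) = lik ν c q.1 :=
    hgood.mono fun q hq => lik_step ν hb.le hq
  have h2 := tower (μ := (gaussM d c).prod (gaussM d a)) (η := gaussM d b)
    (L := fun q => lik ν (c + b) (q.1.1 + q.2))
    (L1 := fun q => lik ν c q.1)
    (g := fun q => lik ν (c + a) (q.1 + q.2) / lik ν c q.1)
    (by fun_prop) (fun q => lik_nonneg ν _ _)
    hs (by fun_prop) (h1.1.congr hae)
  exact ⟨h2.1, h2.2.trans ((integral_congr_ae hae).symm.trans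
    (h1.2.trans (lik_integral ν (add_nonneg hc ha.le)).2))⟩

/-- Supermodularity of the divergence: nonnegativity of the divergence of the joint law of the
increments `(x, α, β)` from the law making `α` and `β` conditionally independent given `x`. -/
lemma ent_supermodular (hν : Integrable (fun y => ‖y‖ ^ 2) ν) {c a b : ℝ} (hc : 0 ≤ c)
    (ha : 0 < a) (hb : 0 < b) :
    ent ν (c + a) + ent ν (c + b) ≤ ent ν (c + a + b) + ent ν c := by
  have habc : 0 < c + a + b := by positivity
  have hP := preserving_add_add d hc ha.le hb.le
  have hL := integral_preserving hP (lik_integral ν habc.le).1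
  rw [(lik_integral ν habc.le).2] at hL
  have hLL := integral_preserving hP (integrable_lik_log ν hν habc.le)
  have hL1 := tower_mid ν hν hc ha hb
  have hL0 := tower_base ν hν hc ha hb
  have hQ := integral_cond_indep ν hc ha hb
  have hL2' := tower_mid ν hν hc hb ha
  have hL2 := integral_preserving (preserving_swap (gaussM d c) (gaussM d a) (gaussM d b)) hL2'.1
  rw [hL2'.2] at hL2
  have hcomm : ∀ x y z : EuclideanSpace ℝ (Fin d),
      lik ν (c + b + a) (x + z + y) = lik ν (c + a + b) (x + y + z) := by
    intro x y z
    rw [add_right_comm c b a, add_right_comm x z y]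
  simp only [hcomm] at hL2
  have hgood : ∀ᵐ q ∂(((gaussM d c).prod (gaussM d a)).prod (gaussM d b)),
      0 < c ∨ (c = 0 ∧ q.1.1 = 0) :=
    Measure.quasiMeasurePreserving_fst.ae (Measure.quasiMeasurePreserving_fst.ae (ae_good hc))
  have key := integral_mono_ae (hL.1.sub hQ.1) (((hLL.1.add hL0.1).sub hL1.1).sub hL2.1)
    (hgood.mono fun q hq => ?_)
  · rw [integral_sub' hL.1 hQ.1, integral_sub' ((hLL.1.add hL0.1).sub hL1.1) hL2.1,
      integral_sub' (hLL.1.add hL0.1) hL1.1, integral_add' hLL.1 hL0.1, hL.2, hQ.2, hLL.2, hL0.2,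
      hL1.2, hL2.2] at key
    unfold ent at *
    linarith
  · simp only [Pi.sub_apply, Pi.add_apply]
    have p0 := lik_pos ν hq
    have p1 := lik_pos ν (s := c + a) (z := q.1.1 + q.1.2) (.inl (by positivity))
    have p2 := lik_pos ν (s := c + b) (z := q.1.1 + q.2) (.inl (by positivity))
    have p := lik_pos ν (s := c + a + b) (z := q.1.1 + q.1.2 + q.2) (.inl habc)
    generalize lik ν c q.1.1 = l0 at *
    generalize lik ν (c + a) (q.1.1 + q.1.2) = l1 at *
    generalize lik ν (c + b) (q.1.1 + q.2) = l2 at *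
    generalize lik ν (c + a + b) (q.1.1 + q.1.2 + q.2) = l at *
    have h := mul_le_mul_of_nonneg_left
      (Real.one_sub_inv_le_log_of_pos (x := l * l0 / (l1 * l2)) (by positivity)) p.le
    rw [Real.log_div (by positivity) (by positivity), Real.log_mul p.ne' p0.ne',
      Real.log_mul p1.ne' p2.ne'] at h
    have h3 : l * (1 - (l * l0 / (l1 * l2))⁻¹) = l - l2 * (l1 / l0) := by
      field_simp
    rw [h3] at h
    linarith

/-! ### Monotonicity of the divergence per unit of signal-to-noise ratio -/

lemma ent_mono (hν : Integrable (fun y => ‖y‖ ^ 2) ν) {s t : ℝ} (hs : 0 ≤ s) (hst : s ≤ t) :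
    ent ν s ≤ ent ν t := by
  rcases hs.eq_or_lt with rfl | hs'
  · rw [ent_zero]
    exact ent_nonneg ν hν hst
  rcases hst.eq_or_lt with rfl | hlt
  · exact le_rfl
  have h := ent_supermodular ν hν le_rfl hs' (sub_pos.2 hlt)
  have h2 := ent_nonneg ν hν (sub_nonneg.2 hst)
  simp only [zero_add, ent_zero, add_sub_cancel] at h
  linarith

/-- `ent ν (n u) / n` is nondecreasing in `n`, since `ent ν (n u)` is convex in `n` and vanishes at
`n = 0`. -/
lemma ent_mul_succ (hν : Integrable (fun y => ‖y‖ ^ 2) ν) {u : ℝ} (hu : 0 < u) (n : ℕ) :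
    (n + 1) * ent ν (n * u) ≤ n * ent ν ((n + 1) * u) := by
  induction n with
  | zero => simp [ent_zero]
  | succ n ih =>
    have h := ent_supermodular ν hν (c := n * u) (by positivity) hu hu
    have e1 : n * u + u = (n + 1) * u := by ring
    have e2 : (n + 1) * u + u = (n + 1 + 1) * u := by ring
    rw [e1, e2] at h
    push_cast
    have hn : (0 : ℝ) ≤ n + 1 := by positivity
    have := mul_le_mul_of_nonneg_left h hn
    linarith

lemma ent_mul_le (hν : Integrable (fun y => ‖y‖ ^ 2) ν) {u : ℝ} (hu : 0 < u) {k n : ℕ}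
    (hk : 0 < k) (hkn : k ≤ n) :
    n * ent ν (k * u) ≤ k * ent ν (n * u) := by
  induction n, hkn using Nat.le_induction with
  | base => exact le_rfl
  | succ m hm ih =>
    have h := ent_mul_succ ν hν hu m
    have hm0 : (0 : ℝ) < m := by exact_mod_cast hk.trans_le hm
    have hk0 : (0 : ℝ) < k := by exact_mod_cast hk
    push_cast
    have h1 := mul_le_mul_of_nonneg_left ih (by positivity : (0 : ℝ) ≤ m + 1)
    have h2 := mul_le_mul_of_nonneg_left h hk0.le
    refine le_of_mul_le_mul_left ?_ hm0
    linarith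

/-- The divergence per unit of signal-to-noise ratio is nondecreasing. -/
lemma ent_le (hν : Integrable (fun y => ‖y‖ ^ 2) ν) {s t : ℝ} (hs : 0 < s) (hst : s < t) :
    ent ν s ≤ s / t * ent ν t := by
  have ht := hs.trans hst
  have hbound : ∀ n : ℕ, ent ν s ≤ (s / t + 1 / ((n : ℝ) + 1)) * ent ν t := by
    intro n
    have hn : (0 : ℝ) < (n : ℝ) + 1 := by positivity
    -- `s` is rounded up to the next multiple `k * u` of the mesh `u = t / (n + 1)`.
    set k := ⌈s * (n + 1) / t⌉₊ with hk
    have hk0 : 0 < k := Nat.ceil_pos.2 (by positivity)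
    have hkn : k ≤ n + 1 := by
      refine Nat.ceil_le.2 ?_
      rw [div_le_iff₀ ht]
      push_cast
      nlinarith
    have hk1 : s * (n + 1) / t ≤ k := Nat.le_ceil _
    have hk2 : (k : ℝ) < s * (n + 1) / t + 1 := Nat.ceil_lt_add_one (by positivity)
    have hu : 0 < t / ((n : ℝ) + 1) := by positivity
    have h := ent_mul_le ν hν hu hk0 hkn
    push_cast at h
    rw [mul_div_cancel₀ _ hn.ne'] at h
    have hm : ent ν s ≤ ent ν (k * (t / ((n : ℝ) + 1))) := by
      refine ent_mono ν hν hs.le ?_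
      rw [div_le_iff₀ ht] at hk1
      rw [← mul_div_assoc, le_div_iff₀ hn]
      exact hk1
    have h0 := ent_nonneg ν hν ht.le
    refine le_of_mul_le_mul_left ?_ hn
    calc ((n : ℝ) + 1) * ent ν s ≤ (n + 1) * ent ν (k * (t / ((n : ℝ) + 1))) := by gcongr
      _ ≤ k * ent ν t := h
      _ ≤ (s * (n + 1) / t + 1) * ent ν t := by gcongr
      _ = _ := by field_simp
  have hlim : Filter.Tendsto (fun n : ℕ => (s / t + 1 / ((n : ℝ) + 1)) * ent ν t) Filter.atTop
      (nhds ((s / t + 0) * ent ν t)) :=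
    (tendsto_const_nhds.add tendsto_one_div_add_atTop_nhds_zero_nat).mul_const _
  rw [add_zero] at hlim
  exact ge_of_tendsto' hlim hbound

end

/-! ### Return to densities -/

/-- After rescaling `x = √ω z`, the divergence of the smoothed density from the Gaussian of
variance `ω` is `ent` at the signal-to-noise ratio `1 / ω`. -/
lemma kl_eq_ent {d : ℕ} {p : EuclideanSpace ℝ (Fin d) → ℝ} (hp_cont : Continuous p)
    (hp_nonneg : ∀ x, 0 ≤ p x) {ν : Measure (EuclideanSpace ℝ (Fin d))} [IsProbabilityMeasure ν]
    (hν : ν = volume.withDensity fun y => ENNReal.ofReal (p y)) {ω : ℝ} (hω : 0 < ω) :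
    ∫ x, gaussConv d p ω x * Real.log (gaussConv d p ω x / gaussD d ω x) = ent ν (1 / ω) := by
  have hratio : ∀ x, gaussConv d p ω x = gaussD d ω x * lik ν (1 / ω) ((1 / ω) • x) := by
    intro x
    rw [lik, hν, integral_withDensity_eq_integral_toReal_smul hp_cont.measurable.ennreal_ofReal
      (by simp), gaussConv, ← integral_const_mul]
    refine integral_congr_ae (.of_forall fun y => ?_)
    simp only [ENNReal.toReal_ofReal (hp_nonneg y), smul_eq_mul]
    rw [mul_left_comm, gaussD, gaussD, tilt, mul_assoc _ (Real.exp _), ← Real.exp_add]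
    congr 3
    rw [norm_sub_sq_real, inner_smul_left]
    simp only [conj_trivial]
    field_simp
    ring
  have hsq : 0 < √ω := Real.sqrt_pos.2 hω
  have hinv : 1 / ω * √ω = √(1 / ω) := by
    rw [Real.sqrt_div zero_le_one, Real.sqrt_one]
    nth_rewrite 1 [← Real.mul_self_sqrt hω.le]
    field_simp
  have hscale : ∀ z : EuclideanSpace ℝ (Fin d), √ω ^ d * gaussD d ω (√ω • z) = gaussD d 1 z := by
    intro z
    rw [gaussD, gaussD, norm_smul, mul_pow, Real.norm_of_nonneg hsq.le, Real.sq_sqrt hω.le,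
      ← mul_assoc, Real.mul_rpow (by positivity) hω.le, mul_one]
    have h1 : √ω ^ d * ω ^ (-(d : ℝ) / 2) = 1 := by
      rw [Real.sqrt_eq_rpow, ← Real.rpow_natCast, ← Real.rpow_mul hω.le, ← Real.rpow_add hω]
      have : 1 / 2 * (d : ℝ) + -(d : ℝ) / 2 = 0 := by ring
      rw [this, Real.rpow_zero]
    rw [mul_left_comm, h1, mul_one]
    congr 2
    field_simp
  have hcv := Measure.integral_comp_smul (μ := volume)
    (fun x => gaussConv d p ω x * Real.log (gaussConv d p ω x / gaussD d ω x)) (√ω)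
  rw [finrank_euclideanSpace, Fintype.card_fin, abs_of_pos (by positivity), smul_eq_mul,
    eq_inv_mul_iff_mul_eq₀ (by positivity)] at hcv
  rw [ent, gaussM, integral_map (by fun_prop) (by fun_prop), integral_stdG, ← hcv,
    ← integral_const_mul]
  refine integral_congr_ae (.of_forall fun z => ?_)
  simp only
  rw [hratio, mul_div_cancel_left₀ _ (gaussD_pos d hω _).ne', smul_smul, hinv, smul_eq_mul,
    ← hscale]
  ring

/-- KL of the smoothed density to the matching Gaussian decays like `1/ω`:
`KL(p_{ω₁}‖γ_{ω₁}) ≤ (ω₀/ω₁) KL(p_{ω₀}‖γ_{ω₀})`; consequently for the variance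
exploding diffusion with marginal variance `σ²(T) - σ²(0)`, the KL to
`N(0,(σ²(T)-σ²(0))I)` is bounded by `C/(σ²(T)-σ²(0))` with `C` independent of `T`. -/
theorem ve_kl_bound (d : ℕ)
    (p : EuclideanSpace ℝ (Fin d) → ℝ)
    (hp_cont : Continuous p) (hp_nonneg : ∀ x, 0 ≤ p x)
    (hp_prob : ∫ x, p x = 1)
    (hp_mom : Integrable (fun x => ‖x‖ ^ 2 * p x))
    (hp_ent : Integrable (fun x => p x * Real.log (p x))) :
    (∀ ω₀ ω₁ : ℝ, 0 < ω₀ → ω₀ < ω₁ →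
      (∫ x, gaussConv d p ω₁ x * Real.log (gaussConv d p ω₁ x / gaussD d ω₁ x)) ≤
        (ω₀ / ω₁) *
          ∫ x, gaussConv d p ω₀ x * Real.log (gaussConv d p ω₀ x / gaussD d ω₀ x)) ∧
    (∀ (σ2 : ℝ → ℝ) (τ : ℝ), σ2 0 < σ2 τ →
      ∃ C : ℝ, ∀ T, σ2 τ ≤ σ2 T →
        (∫ x, gaussConv d p (σ2 T - σ2 0) x *
            Real.log (gaussConv d p (σ2 T - σ2 0) x / gaussD d (σ2 T - σ2 0) x)) ≤
          C / (σ2 T - σ2 0)) := by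
  have hint : Integrable p := by
    by_contra h
    rw [integral_undef h] at hp_prob
    exact zero_ne_one hp_prob
  obtain ⟨ν, hν⟩ : ∃ ν : Measure (EuclideanSpace ℝ (Fin d)),
      ν = volume.withDensity fun y => ENNReal.ofReal (p y) := ⟨_, rfl⟩
  have : IsProbabilityMeasure ν := by
    constructor
    rw [hν, withDensity_apply _ MeasurableSet.univ, Measure.restrict_univ,
      ← ofReal_integral_eq_lintegral_ofReal hint (.of_forall hp_nonneg), hp_prob]
    simp
  have hmom : Integrable (fun y => ‖y‖ ^ 2) ν := by
    rw [hν, integrable_withDensity_iff_integrable_smul' hp_cont.measurable.ennreal_ofReal (by simp)]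
    refine hp_mom.congr (.of_forall fun y => ?_)
    simp only [ENNReal.toReal_ofReal (hp_nonneg y), smul_eq_mul]
    ring
  have main : ∀ ω₀ ω₁ : ℝ, 0 < ω₀ → ω₀ < ω₁ →
      (∫ x, gaussConv d p ω₁ x * Real.log (gaussConv d p ω₁ x / gaussD d ω₁ x)) ≤
        (ω₀ / ω₁) *
          ∫ x, gaussConv d p ω₀ x * Real.log (gaussConv d p ω₀ x / gaussD d ω₀ x) := by
    intro ω₀ ω₁ h0 h01
    have h1 := h0.trans h01
    rw [kl_eq_ent hp_cont hp_nonneg hν h1, kl_eq_ent hp_cont hp_nonneg hν h0]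
    have h := ent_le ν hmom (one_div_pos.2 h1) (one_div_lt_one_div_of_lt h0 h01)
    have e : 1 / ω₁ / (1 / ω₀) = ω₀ / ω₁ := by field_simp
    rwa [e] at h
  refine ⟨main, fun σ2 τ hτ => ?_⟩
  refine ⟨(σ2 τ - σ2 0) * ∫ x, gaussConv d p (σ2 τ - σ2 0) x *
    Real.log (gaussConv d p (σ2 τ - σ2 0) x / gaussD d (σ2 τ - σ2 0) x), fun T hT => ?_⟩
  have hpos : 0 < σ2 τ - σ2 0 := sub_pos.2 hτ
  rcases hT.eq_or_lt with h | h
  · rw [← h, mul_div_cancel_left₀ _ hpos.ne']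
  · rw [mul_div_right_comm]
    exact main _ _ hpos (sub_lt_sub_right h _)
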